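/- arXiv:1405.3194 — 2 statements merged into one kernel-verified Lean document; each statement's English description precedes it below -/
import Mathlib

section
/- For every positive integer k, the alternating quadratic cosine sum satisfies ∑_{n=1}^{2k-2} (-1)^n * cos(π n² / (2(2k-1))) = -(-1)^k * √(2k-1)/2 - 1/2. -/
open Finset Real
open Filter Topology Complex

/-!
Splitting the theta series by residues modulo `q` and applying Poisson summation to each class
shows `θ (p / q + i / (q² w)) ~ √w ∑_{r < q} exp (πi p r² / q)` as `Re w → ∞`, so quadratic Gauss
sums are the leading coefficients of `θ` at rational points. In this coordinate the inversion
`τ ↦ -1 / τ` exchanges the points `p / q` and `-q / p` and merely translates `w` by `i / (p q)`;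
comparing leading coefficients gives the Landsberg–Schaar reciprocity law, and `p = 1`, `q = 2 N`
gives `∑_{m < 2N} exp (πi m² / (2N)) = √N (1 + i)`. Recentring this sum at `m = N + j`, the
expansion `(N + j)² / (2N) = j² / (2N) + j + N / 2` produces the alternating sign `(-1) ^ j`.
-/

theorem tendsto_jacobiTheta₂_comap_im_atTop (z : ℂ) :
    Tendsto (jacobiTheta₂ z) (comap im atTop) (𝓝 1) := by
  have termwise (n : ℤ) :
      Tendsto (jacobiTheta₂_term n z) (comap im atTop) (𝓝 (if n = 0 then 1 else 0)) := by
    split_ifs with hn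
    · have hconst : jacobiTheta₂_term 0 z = fun _ ↦ 1 := by
        ext τ
        simp [jacobiTheta₂_term]
      simpa only [hn, hconst] using tendsto_const_nhds
    · rw [tendsto_zero_iff_norm_tendsto_zero]
      simp only [norm_jacobiTheta₂_term]
      refine Real.tendsto_exp_atBot.comp (tendsto_atBot_add_const_right _ _ ?_)
      have hneg : -π * (n : ℝ) ^ 2 < 0 :=
        mul_neg_of_neg_of_pos (neg_lt_zero.2 pi_pos) (by positivity)
      exact tendsto_comap.const_mul_atTop_of_neg hneg
  have bound : ∀ᶠ τ in comap im atTop, ∀ n : ℤ,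
      ‖jacobiTheta₂_term n z τ‖ ≤ rexp (-π * (1 * n ^ 2 - 2 * |z.im| * |n|)) := by
    filter_upwards [tendsto_comap.eventually_ge_atTop 1] with τ hτ n
    exact norm_jacobiTheta₂_term_le one_pos le_rfl hτ n
  have summable_bound := summable_pow_mul_jacobiTheta₂_term_bound |z.im| one_pos 0
  simp only [pow_zero, one_mul] at summable_bound bound
  simpa only [tsum_ite_eq] using!
    tendsto_tsum_of_dominated_convergence summable_bound termwise bound

theorem tsum_int_eq_sum_range_tsum {E : Type*} [AddCommGroup E] [UniformSpace E]
    [IsUniformAddGroup E] [CompleteSpace E] [T2Space E] {f : ℤ → E} (hf : Summable f)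
    (q : ℕ) [NeZero q] :
    ∑' n, f n = ∑ r ∈ range q, ∑' m : ℤ, f (m * q + r) := by
  let e : Fin q × ℤ ≃ ℤ := (Equiv.prodComm _ _).trans (Int.divModEquiv q).symm
  calc ∑' n, f n = ∑' x, f (e x) := (e.tsum_eq f).symm
    _ = ∑ r : Fin q, ∑' m : ℤ, f (m * q + (r : ℕ)) := by
      rw [Summable.tsum_prod (f := fun x ↦ f (e x)) (e.summable_iff.2 hf), tsum_fintype]
      rfl
    _ = ∑ r ∈ range q, ∑' m : ℤ, f (m * q + r) :=
      Fin.sum_univ_eq_sum_range (fun r ↦ ∑' m : ℤ, f (m * q + r)) q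

theorem tsum_exp_neg_pi_div_mul_add_sq {w : ℂ} (hw : 0 < w.re) (x : ℂ) :
    ∑' m : ℤ, cexp (-π / w * (m + x) ^ 2) = w ^ (1 / 2 : ℂ) * jacobiTheta₂ x (I * w) := by
  have hsqrt : w ^ (1 / 2 : ℂ) ≠ 0 := by simp [cpow_eq_zero_iff, ne_zero_of_re_pos hw]
  have hterm (n : ℤ) :
      jacobiTheta₂_term n (-x) (I * w) = cexp (-π * w * n ^ 2 + 2 * π * (-I * x) * n) := by
    rw [jacobiTheta₂_term]
    congr 1
    linear_combination (π * n ^ 2 * w : ℂ) * I_sq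
  have hI : I * (-I * x) = x := by linear_combination -x * I_sq
  rw [← jacobiTheta₂_neg_left, jacobiTheta₂, tsum_congr hterm, tsum_exp_neg_quadratic hw,
    ← mul_assoc, mul_one_div_cancel hsqrt, one_mul, hI]

theorem ofReal_mul_cpow {r : ℝ} (hr : 0 ≤ r) (z s : ℂ) :
    (r * z) ^ s = (r : ℂ) ^ s * z ^ s := by
  rcases eq_or_ne s 0 with rfl | hs
  · simp
  rcases hr.eq_or_lt with rfl | hr
  · simp [hs]
  rcases eq_or_ne z 0 with rfl | hz
  · simp [hs]
  have hr₀ : (r : ℂ) ≠ 0 := mod_cast hr.ne'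
  rw [cpow_def_of_ne_zero (mul_ne_zero hr₀ hz), cpow_def_of_ne_zero hr₀, cpow_def_of_ne_zero hz,
    log_ofReal_mul hr hz, ofReal_log hr.le, add_mul, Complex.exp_add]

theorem tendsto_add_const_cpow_div_cpow (c s : ℂ) :
    Tendsto (fun t : ℝ ↦ (t + c) ^ s / (t : ℂ) ^ s) atTop (𝓝 1) := by
  have hlim : Tendsto (fun t : ℝ ↦ (1 + c * ((t⁻¹ : ℝ) : ℂ)) ^ s) atTop (𝓝 1) := by
    have hcont : ContinuousAt (fun u : ℝ ↦ (1 + c * (u : ℂ)) ^ s) 0 :=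
      ContinuousAt.cpow (by fun_prop) continuousAt_const (by simp)
    simpa [Function.comp_def] using hcont.tendsto.comp tendsto_inv_atTop_zero
  refine hlim.congr' ?_
  filter_upwards [eventually_gt_atTop 0] with t ht
  have ht₀ : (t : ℂ) ≠ 0 := mod_cast ht.ne'
  have hfactor : t + c = t * (1 + c * ((t⁻¹ : ℝ) : ℂ)) := by push_cast; field_simp
  rw [hfactor, ofReal_mul_cpow ht.le, mul_div_cancel_left₀]
  simp [cpow_eq_zero_iff, ht.ne']

/-- The quadratic Gauss sum `∑ exp (πi p r² / q)` over `0 ≤ r < q`. The exponent carries `πi`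
rather than `2πi`, so the summand depends only on `r` modulo `q` when `p * q` is even. -/
noncomputable def quadraticGaussSum (p : ℤ) (q : ℕ) : ℂ :=
  ∑ r ∈ range q, cexp (π * I * p * r ^ 2 / q)

theorem exp_pi_I_mul_sq_div_periodic {p : ℤ} {q : ℕ} (hq : q ≠ 0) (hpq : Even (p * q)) :
    Function.Periodic (fun n : ℤ ↦ cexp (π * I * p * n ^ 2 / q)) q := by
  intro n
  obtain ⟨l, hl⟩ := hpq
  have hlC : (p * q : ℂ) = l + l := mod_cast hl
  refine Complex.exp_eq_exp_iff_exists_int.2 ⟨p * n + l, ?_⟩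
  have : (q : ℂ) ≠ 0 := mod_cast hq
  push_cast
  field_simp
  linear_combination (q : ℂ) * hlC

theorem jacobiTheta₂_zero_rat_add_I_div {p : ℤ} {q : ℕ} (hq : q ≠ 0) (hpq : Even (p * q)) {w : ℂ}
    (hw : 0 < w.re) :
    jacobiTheta₂ 0 (p / q + I / (q ^ 2 * w)) =
      w ^ (1 / 2 : ℂ) *
        ∑ r ∈ range q, cexp (π * I * p * r ^ 2 / q) * jacobiTheta₂ (r / q) (I * w) := by
  have : NeZero q := ⟨hq⟩
  have hqC : (q : ℂ) ≠ 0 := mod_cast hq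
  have hw₀ : w ≠ 0 := ne_zero_of_re_pos hw
  have him : 0 < (p / q + I / (q ^ 2 * w) : ℂ).im := by
    have hparts : (p / q + I / (q ^ 2 * w) : ℂ) =
        ((p / q : ℝ) : ℂ) + ((1 / q ^ 2 : ℝ) : ℂ) * (I * w⁻¹) := by
      push_cast
      field_simp
    rw [hparts, add_im, ofReal_im, zero_add, im_ofReal_mul, I_mul_im, inv_re]
    have := normSq_pos.2 hw₀
    positivity
  have hterm (r : ℕ) (m : ℤ) :
      jacobiTheta₂_term (m * q + r) 0 (p / q + I / (q ^ 2 * w)) =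
        cexp (π * I * p * r ^ 2 / q) * cexp (-π / w * (m + r / q) ^ 2) := by
    have hperiod := (exp_pi_I_mul_sq_div_periodic hq hpq).int_mul m r
    simp only [Int.cast_natCast] at hperiod
    rw [← hperiod, jacobiTheta₂_term, ← Complex.exp_add]
    congr 1
    push_cast
    field_simp
    linear_combination (m * q + r : ℂ) ^ 2 * I_sq
  rw [jacobiTheta₂, tsum_int_eq_sum_range_tsum ((summable_jacobiTheta₂_term_iff _ _).2 him) q,
    mul_sum]
  refine sum_congr rfl fun r _ ↦ ?_
  rw [tsum_congr (hterm r), tsum_mul_left, tsum_exp_neg_pi_div_mul_add_sq hw, mul_left_comm]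

theorem tendsto_jacobiTheta₂_zero_rat_add_I_div {p : ℤ} {q : ℕ} (hq : q ≠ 0)
    (hpq : Even (p * q)) :
    Tendsto (fun w : ℂ ↦ jacobiTheta₂ 0 (p / q + I / (q ^ 2 * w)) / w ^ (1 / 2 : ℂ))
      (comap re atTop) (𝓝 (quadraticGaussSum p q)) := by
  have him : Tendsto (fun w : ℂ ↦ I * w) (comap re atTop) (comap im atTop) := by
    simpa only [tendsto_comap_iff, Function.comp_def, I_mul_im] using tendsto_comap
  have hsum : Tendsto (fun w : ℂ ↦
      ∑ r ∈ range q, cexp (π * I * p * r ^ 2 / q) * jacobiTheta₂ (r / q) (I * w))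
      (comap re atTop) (𝓝 (quadraticGaussSum p q)) := by
    simpa only [quadraticGaussSum, mul_one, Function.comp_apply] using
      tendsto_finsetSum (range q) fun r _ ↦
        ((tendsto_jacobiTheta₂_comap_im_atTop (r / q)).comp him).const_mul
          (cexp (π * I * p * r ^ 2 / q))
  refine hsum.congr' ?_
  filter_upwards [tendsto_comap.eventually_gt_atTop 0] with w hw
  have hw₀ : w ≠ 0 := ne_zero_of_re_pos hw
  rw [jacobiTheta₂_zero_rat_add_I_div hq hpq hw, mul_div_cancel_left₀]
  simp [cpow_eq_zero_iff, hw₀]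

theorem jacobiTheta₂_zero_rat_add_I_div_functional_equation {p q : ℕ} (hp : p ≠ 0) (hq : q ≠ 0)
    {w : ℂ} (hw : 0 < w.re) :
    jacobiTheta₂ 0 (p / q + I / (q ^ 2 * w)) =
      1 / (-I * (p / q + I / (q ^ 2 * w))) ^ (1 / 2 : ℂ) *
        jacobiTheta₂ 0 (-q / p + I / (p ^ 2 * (w + I / (p * q)))) := by
  have hpC : (p : ℂ) ≠ 0 := mod_cast hp
  have hqC : (q : ℂ) ≠ 0 := mod_cast hq
  have hw₀ : w ≠ 0 := ne_zero_of_re_pos hw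
  have hshift : w + I / (p * q) = (p * q * w + I) / (p * q) := by field_simp
  have hne : p * q * w + I ≠ 0 := by
    refine ne_zero_of_re_pos ?_
    rw [add_re, I_re, add_zero, ← Nat.cast_mul, ← ofReal_natCast, re_ofReal_mul]
    positivity
  have hinv : -1 / (p / q + I / (q ^ 2 * w)) = -q / p + I / (p ^ 2 * (w + I / (p * q))) := by
    have hτ : p / q + I / (q ^ 2 * w) = (p * q * w + I) / (q ^ 2 * w) := by field_simp
    rw [hτ, hshift]
    field_simp
    ring
  rw [jacobiTheta₂_functional_equation 0, hinv]
  simp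

theorem one_div_neg_I_mul_ofReal_cpow_half {r : ℝ} (hr : 0 < r) :
    1 / (-I * r) ^ (1 / 2 : ℂ) = √r⁻¹ * cexp (π * I / 4) := by
  have hsqrt : (r : ℂ) ^ (1 / 2 : ℂ) = √r := by
    rw [Real.sqrt_eq_rpow, ofReal_cpow hr.le]
    norm_num
  have hunit : (-I) ^ (1 / 2 : ℂ) = cexp (-(π * I / 4)) := by
    rw [cpow_def_of_ne_zero (neg_ne_zero.2 I_ne_zero), log_neg_I]
    ring_nf
  rw [mul_comm, ofReal_mul_cpow hr.le, hsqrt, hunit, Complex.exp_neg, Real.sqrt_inv, ofReal_inv]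
  field_simp

theorem tendsto_one_div_neg_I_mul_add_I_div_cpow_half {r : ℝ} (hr : 0 < r) (c : ℂ) :
    Tendsto (fun t : ℝ ↦ 1 / (-I * (r + I / (c * t))) ^ (1 / 2 : ℂ)) atTop
      (𝓝 (√r⁻¹ * cexp (π * I / 4))) := by
  have hslit : -I * (r + I / c * (0 : ℝ)) ∈ slitPlane := by
    simp [mem_slitPlane_iff, hr.ne']
  have hcont : ContinuousAt (fun u : ℝ ↦ 1 / (-I * (r + I / c * u)) ^ (1 / 2 : ℂ)) 0 := by
    refine continuousAt_const.div (.cpow (by fun_prop) continuousAt_const hslit) ?_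
    simp [cpow_eq_zero_iff, hr.ne']
  have hinv (t : ℝ) : I / (c * t) = I / c * (t⁻¹ : ℝ) := by
    rw [div_mul_eq_div_div, ofReal_inv, div_eq_mul_inv (I / c)]
  rw [← one_div_neg_I_mul_ofReal_cpow_half hr]
  simpa [Function.comp_def, hinv] using hcont.tendsto.comp tendsto_inv_atTop_zero

theorem quadraticGaussSum_reciprocity {p q : ℕ} (hp : p ≠ 0) (hq : q ≠ 0) (hpq : Even (p * q)) :
    quadraticGaussSum p q = √(q / p) * cexp (π * I / 4) * quadraticGaussSum (-q) p := by
  have hre : Tendsto (fun t : ℝ ↦ (t : ℂ)) atTop (comap re atTop) :=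
    tendsto_comap_iff.2 tendsto_id
  have hre_shift : Tendsto (fun t : ℝ ↦ t + I / (p * q)) atTop (comap re atTop) := by
    have hI : (I / (p * q)).re = 0 := by
      rw [← Nat.cast_mul, div_natCast_re, I_re, zero_div]
    simpa [tendsto_comap_iff, Function.comp_def, hI] using! tendsto_id (α := ℝ)
  have hleft := (tendsto_jacobiTheta₂_zero_rat_add_I_div (p := p) hq (mod_cast hpq)).comp hre
  have hright := (tendsto_jacobiTheta₂_zero_rat_add_I_div (p := -q) hp
    (by rw [neg_mul, mul_comm, even_neg]; exact mod_cast hpq)).comp hre_shift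
  have hfactor := tendsto_one_div_neg_I_mul_add_I_div_cpow_half
    (show (0 : ℝ) < p / q by positivity) (q ^ 2)
  have hquotient := tendsto_add_const_cpow_div_cpow (I / (p * q)) (1 / 2)
  have hprod := (hfactor.mul hquotient).mul hright
  rw [mul_one, inv_div] at hprod
  refine tendsto_nhds_unique hleft (hprod.congr' ?_)
  filter_upwards [eventually_gt_atTop 0, hre_shift.eventually
    (tendsto_comap.eventually_gt_atTop 0)] with t ht hshift
  have hsqrt : (t + I / (p * q)) ^ (1 / 2 : ℂ) ≠ 0 := by
    simp only [Ne, cpow_eq_zero_iff, ne_zero_of_re_pos hshift, false_and, not_false_eq_true]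
  simp only [Function.comp_apply, Int.cast_natCast, Int.cast_neg, ofReal_div, ofReal_natCast]
  rw [jacobiTheta₂_zero_rat_add_I_div_functional_equation hp hq (by simpa using ht), mul_assoc,
    div_mul_div_cancel₀' hsqrt, mul_div_assoc]

theorem quadraticGaussSum_one_two_mul (N : ℕ) :
    quadraticGaussSum 1 (2 * N) = √N * (1 + I) := by
  rcases eq_or_ne N 0 with rfl | hN
  · simp [quadraticGaussSum]
  have hexp : cexp (π * I / 4) = √2 / 2 * (1 + I) := by
    rw [show (π * I / 4 : ℂ) = ((π / 4 : ℝ) : ℂ) * I by push_cast; ring, exp_mul_I, ← ofReal_cos,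
      ← ofReal_sin, Real.cos_pi_div_four, Real.sin_pi_div_four]
    push_cast
    ring
  have hone : quadraticGaussSum (-(2 * N : ℕ)) 1 = 1 := by simp [quadraticGaussSum]
  have hsqrt : (√2 * √2 : ℂ) = 2 := mod_cast Real.mul_self_sqrt zero_le_two
  have hrec := quadraticGaussSum_reciprocity one_ne_zero (mul_ne_zero two_ne_zero hN) (by simp)
  rw [hone, mul_one, hexp, Nat.cast_one, Nat.cast_one, div_one, Nat.cast_mul, Nat.cast_two,
    Real.sqrt_mul zero_le_two, ofReal_mul] at hrec
  rw [hrec]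
  linear_combination (√N * (1 + I) / 2 : ℂ) * hsqrt

theorem sum_range_two_mul_eq_sum_Ico_sub_add_add {M : Type*} [AddCommMonoid M]
    (f : ℕ → M) {N : ℕ} (hN : N ≠ 0) :
    ∑ m ∈ range (2 * N), f m = f 0 + f N + ∑ n ∈ Ico 1 N, (f (N - n) + f (N + n)) := by
  have hpos := Nat.pos_of_ne_zero hN
  have hleft : ∑ n ∈ Ico 1 N, f (N - n) = ∑ n ∈ Ico 1 N, f n := by
    rw [sum_Ico_reflect f 1 (Nat.le_succ N)]
    simp
  have hright : ∑ m ∈ range N, f (N + m) = f N + ∑ n ∈ Ico 1 N, f (N + n) := by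
    rw [range_eq_Ico, sum_eq_sum_Ico_succ_bot hpos, add_zero]
  rw [two_mul, sum_range_add, hright, range_eq_Ico, sum_eq_sum_Ico_succ_bot hpos, sum_add_distrib,
    hleft]
  abel

theorem cos_pi_mul_add_sq_div_sub {N : ℝ} (hN : N ≠ 0) (j : ℤ) :
    Real.cos (π * (N + j) ^ 2 / (2 * N) - π * N / 2) =
      (-1) ^ j * Real.cos (π * j ^ 2 / (2 * N)) := by
  have hangle : π * (N + j) ^ 2 / (2 * N) - π * N / 2 = π * j ^ 2 / (2 * N) + j * π := by
    field_simp
    ring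
  rw [hangle, Real.cos_add_int_mul_pi]

theorem sum_range_two_mul_cos_pi_mul_sq_div_sub (N : ℕ) :
    ∑ m ∈ range (2 * N), Real.cos (π * m ^ 2 / (2 * N) - π * N / 2) =
      √N * (Real.cos (π * N / 2) + Real.sin (π * N / 2)) := by
  have hgauss : ∑ m ∈ range (2 * N), cexp ((π * m ^ 2 / (2 * N) : ℝ) * I) = √N * (1 + I) := by
    rw [← quadraticGaussSum_one_two_mul, quadraticGaussSum]
    refine sum_congr rfl fun m _ ↦ ?_
    congr 1
    push_cast
    ring
  have hcos : ∑ m ∈ range (2 * N), Real.cos (π * m ^ 2 / (2 * N)) = √N := by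
    simpa [-ofReal_div, exp_ofReal_mul_I_re] using congrArg re hgauss
  have hsin : ∑ m ∈ range (2 * N), Real.sin (π * m ^ 2 / (2 * N)) = √N := by
    simpa [-ofReal_div, exp_ofReal_mul_I_im] using congrArg im hgauss
  simp only [Real.cos_sub, sum_add_distrib, ← sum_mul, hcos, hsin]
  ring

theorem alternating_quadratic_cosine_sum_general {N : ℕ} (hN : N ≠ 0) :
    ∑ n ∈ Ico 1 N, (-1 : ℝ) ^ n * Real.cos (π * n ^ 2 / (2 * N)) =
      (√N * (Real.cos (π * N / 2) + Real.sin (π * N / 2)) - Real.cos (π * N / 2) - 1) / 2 := by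
  have hNR : (N : ℝ) ≠ 0 := mod_cast hN
  set f : ℕ → ℝ := fun m ↦ Real.cos (π * m ^ 2 / (2 * N) - π * N / 2) with hf
  have hzero : f 0 = Real.cos (π * N / 2) := by simp [hf]
  have hmiddle : f N = 1 := by
    simpa using cos_pi_mul_add_sq_div_sub hNR 0
  have hpair : ∀ n ∈ Ico 1 N,
      f (N - n) + f (N + n) = 2 * ((-1) ^ n * Real.cos (π * n ^ 2 / (2 * N))) := by
    intro n hn
    have hsub := cos_pi_mul_add_sq_div_sub hNR (-n)
    have hadd := cos_pi_mul_add_sq_div_sub hNR n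
    simp only [hf, Nat.cast_sub (mem_Ico.1 hn).2.le]
    simp only [Int.cast_neg, Int.cast_natCast, ← sub_eq_add_neg, neg_sq, zpow_neg, zpow_natCast,
      ← inv_pow, inv_neg_one, Nat.cast_add] at hsub hadd ⊢
    rw [hsub, hadd]
    ring
  have hsum := sum_range_two_mul_cos_pi_mul_sq_div_sub N
  rw [sum_range_two_mul_eq_sum_Ico_sub_add_add f hN, hzero, hmiddle, sum_congr rfl hpair,
    ← mul_sum] at hsum
  linarith

theorem alternating_quadratic_cosine_sum (k : ℕ) (hk : 0 < k) :
    ∑ n ∈ Finset.Icc 1 (2 * k - 2), (-1 : ℝ) ^ n *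
        Real.cos (π * (n : ℝ) ^ 2 / (2 * (2 * (k : ℝ) - 1))) =
      -(-1 : ℝ) ^ k * Real.sqrt (2 * (k : ℝ) - 1) / 2 - 1 / 2 := by
  have hcast : ((2 * k - 1 : ℕ) : ℝ) = 2 * k - 1 := by
    rw [Nat.cast_pred (by lia), Nat.cast_mul, Nat.cast_two]
  have hangle : π * (2 * k - 1) / 2 = k * π - π / 2 := by ring
  have hIcc : Icc 1 (2 * k - 2) = Ico 1 (2 * k - 1) := by ext; simp only [mem_Icc, mem_Ico]; lia
  rw [hIcc, ← hcast, alternating_quadratic_cosine_sum_general (by lia), hcast, hangle,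
    Real.cos_sub_pi_div_two, Real.sin_sub_pi_div_two, Real.sin_nat_mul_pi, Real.cos_nat_mul_pi]
  ring
end

section
/- For every positive integer k, ∑_{n=1}^{2k-2} (-1)^n * cos(π n² / (4k-3)) = -1/2 - (-1)^k * √(4k-3)/2. -/
open Finset Real

/-!
Gauss's evaluation of the quadratic Gauss sum, sign included. Summing the `q`-binomial
coefficients of order `2M` with alternating signs gives `∏_{j < M} (1 - q^(2j+1))`. When `q` is a
primitive root of unity of order `2M + 1`, those coefficients degenerate to
`± q^(-k(k+1)/2)`, so completing the square turns the identity into a product formula for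
`∑_{|n| ≤ M} ζ^(n²)`. For `ζ = -exp(πi/(2M+1))` each factor is `-i` times a positive sine, which
settles the argument of the sum; its square is `(-1)^M (2M+1)`, which settles the modulus.
-/

section QBinomial

/-- The Gaussian binomial coefficient `[n choose k]_q`, defined by the `q`-Pascal rule so that it
makes sense for every `q`, roots of unity included. -/
def qBinomial {R : Type*} [CommSemiring R] (q : R) : ℕ → ℕ → R
  | _, 0 => 1
  | 0, _ + 1 => 0
  | n + 1, k + 1 => qBinomial q n k + q ^ (k + 1) * qBinomial q n (k + 1)

/-- The value at `x` of the `n`-th Rogers–Szegő polynomial; at `x = -1` it is the alternating sum of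
the `q`-binomial coefficients of order `n`. -/
def rogersSzego {R : Type*} [CommSemiring R] (q x : R) (n : ℕ) : R :=
  ∑ k ∈ range (n + 1), qBinomial q n k * x ^ k

section CommSemiring

variable {R : Type*} [CommSemiring R] (q : R)

@[simp]
lemma qBinomial_zero_right (n : ℕ) : qBinomial q n 0 = 1 := by
  cases n <;> rfl

lemma qBinomial_succ_succ (n k : ℕ) :
    qBinomial q (n + 1) (k + 1) = qBinomial q n k + q ^ (k + 1) * qBinomial q n (k + 1) :=
  rfl

lemma qBinomial_eq_zero_of_lt {n k : ℕ} (h : n < k) : qBinomial q n k = 0 := by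
  induction n generalizing k with
  | zero =>
    obtain ⟨k, rfl⟩ := Nat.exists_eq_succ_of_ne_zero h.ne'
    rfl
  | succ n ih =>
    obtain ⟨k, rfl⟩ := Nat.exists_eq_succ_of_ne_zero (Nat.ne_zero_of_lt h)
    rw [Nat.succ_eq_add_one, qBinomial_succ_succ, ih (by omega), ih (by omega), mul_zero, add_zero]

-- The second `q`-Pascal rule `[n+1, k+1] = q^(n-k) [n, k] + [n, k+1]`, multiplied by `q^(k+1)` so
-- that no truncated subtraction occurs.
lemma pow_mul_qBinomial_succ_succ (n k : ℕ) :
    q ^ (k + 1) * qBinomial q (n + 1) (k + 1) =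
      q ^ (n + 1) * qBinomial q n k + q ^ (k + 1) * qBinomial q n (k + 1) := by
  induction n generalizing k with
  | zero => cases k <;> simp [qBinomial]
  | succ n ih =>
    cases k with
    | zero =>
      have ih_zero := ih 0
      simp only [zero_add, pow_one, qBinomial_zero_right, mul_one] at ih_zero ⊢
      calc q * qBinomial q (n + 2) 1
          = q + q * (q * qBinomial q (n + 1) 1) := by
            rw [qBinomial_succ_succ q (n + 1), qBinomial_zero_right]; ring
        _ = q ^ (n + 2) + q * (1 + q * qBinomial q n 1) := by rw [ih_zero]; ring
        _ = q ^ (n + 2) + q * qBinomial q (n + 1) 1 := by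
            rw [qBinomial_succ_succ q n, qBinomial_zero_right, zero_add, pow_one]
    | succ k =>
      calc q ^ (k + 2) * qBinomial q (n + 2) (k + 2)
          = q * (q ^ (k + 1) * qBinomial q (n + 1) (k + 1)) +
              q ^ (k + 2) * (q ^ (k + 2) * qBinomial q (n + 1) (k + 2)) := by
            rw [qBinomial_succ_succ q (n + 1)]; ring
        _ = q ^ (n + 2) * (qBinomial q n k + q ^ (k + 1) * qBinomial q n (k + 1)) +
              q ^ (k + 2) * (qBinomial q n (k + 1) + q ^ (k + 2) * qBinomial q n (k + 2)) := by
            rw [ih k, ih (k + 1)]; ring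
        _ = q ^ (n + 2) * qBinomial q (n + 1) (k + 1) +
              q ^ (k + 2) * qBinomial q (n + 1) (k + 2) := by
            rw [← qBinomial_succ_succ, ← qBinomial_succ_succ]

lemma rogersSzego_eq_one_add (x : R) (n : ℕ) :
    rogersSzego q x n = 1 + ∑ k ∈ range (n + 1), qBinomial q n (k + 1) * x ^ (k + 1) := by
  have h := sum_range_succ' (fun k ↦ qBinomial q n k * x ^ k) (n + 1)
  rw [sum_range_succ, qBinomial_eq_zero_of_lt q n.lt_succ_self] at h
  simpa [rogersSzego, add_comm] using h

lemma rogersSzego_succ (x : R) (n : ℕ) :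
    rogersSzego q x (n + 1) = x * rogersSzego q x n + rogersSzego q (q * x) n := by
  rw [rogersSzego_eq_one_add q (q * x), rogersSzego, rogersSzego, sum_range_succ', mul_sum,
    qBinomial_zero_right, pow_zero, mul_one, add_comm, add_left_comm, ← sum_add_distrib]
  congr 1
  refine sum_congr rfl fun k _ ↦ ?_
  rw [qBinomial_succ_succ]
  ring

lemma rogersSzego_mul_succ (x : R) (n : ℕ) :
    rogersSzego q (q * x) (n + 1) =
      x * q ^ (n + 1) * rogersSzego q x n + rogersSzego q (q * x) n := by
  rw [rogersSzego_eq_one_add q (q * x) n, rogersSzego, rogersSzego, sum_range_succ', mul_sum,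
    qBinomial_zero_right, pow_zero, mul_one, add_comm, add_left_comm, ← sum_add_distrib]
  congr 1
  refine sum_congr rfl fun k _ ↦ ?_
  calc qBinomial q (n + 1) (k + 1) * (q * x) ^ (k + 1)
      = x ^ (k + 1) * (q ^ (k + 1) * qBinomial q (n + 1) (k + 1)) := by ring
    _ = _ := by rw [pow_mul_qBinomial_succ_succ]; ring

end CommSemiring

section CommRing

variable {R : Type*} [CommRing R]

lemma one_sub_pow_mul_qBinomial_succ_succ (q : R) (n k : ℕ) :
    (1 - q ^ (k + 1)) * qBinomial q (n + 1) (k + 1) = (1 - q ^ (n + 1)) * qBinomial q n k := by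
  linear_combination qBinomial_succ_succ q n k - pow_mul_qBinomial_succ_succ q n k

lemma rogersSzego_add_two (q x : R) (n : ℕ) :
    rogersSzego q x (n + 2) =
      (1 + x) * rogersSzego q x (n + 1) - x * (1 - q ^ (n + 1)) * rogersSzego q x n := by
  linear_combination rogersSzego_succ q x (n + 1) + rogersSzego_mul_succ q x n
    - rogersSzego_succ q x n

lemma rogersSzego_neg_one_two_mul (q : R) (m : ℕ) :
    rogersSzego q (-1) (2 * m) = ∏ j ∈ range m, (1 - q ^ (2 * j + 1)) := by
  induction m with
  | zero => simp [rogersSzego]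
  | succ m ih =>
    rw [mul_add_one, rogersSzego_add_two, prod_range_succ, ih]
    ring

lemma qBinomial_eq_zero_of_isPrimitiveRoot [IsDomain R] {q : R} {n k : ℕ}
    (hq : IsPrimitiveRoot q (n + 1)) (hk : k < n) : qBinomial q (n + 1) (k + 1) = 0 := by
  have h := one_sub_pow_mul_qBinomial_succ_succ q n k
  rw [hq.pow_eq_one, sub_self, zero_mul] at h
  have hne : 1 - q ^ (k + 1) ≠ 0 :=
    sub_ne_zero.mpr (hq.pow_ne_one_of_pos_of_lt k.succ_ne_zero (by omega)).symm
  exact (mul_eq_zero.mp h).resolve_left hne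

lemma pow_choose_mul_qBinomial_of_isPrimitiveRoot [IsDomain R] {q : R} {n k : ℕ}
    (hq : IsPrimitiveRoot q (n + 1)) (hk : k ≤ n) :
    q ^ (k + 1).choose 2 * qBinomial q n k = (-1) ^ k := by
  induction k with
  | zero => simp
  | succ k ih =>
    have hvanish := qBinomial_eq_zero_of_isPrimitiveRoot hq hk
    rw [qBinomial_succ_succ] at hvanish
    rw [Nat.choose_succ_succ' (k + 1) 1, Nat.choose_one_right, pow_add]
    linear_combination q ^ (k + 1).choose 2 * hvanish - ih (by omega)

end CommRing

end QBinomial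

section GaussSum

lemma sum_Icc_neg_eq_sum_range {A : Type*} [AddCommMonoid A] (f : ℤ → A) (m : ℕ) :
    ∑ n ∈ Icc (-m : ℤ) m, f n = ∑ k ∈ range (2 * m + 1), f (k - m) := by
  have hcard : ((m : ℤ) + 1 - -m).toNat = 2 * m + 1 := by omega
  rw [Int.Icc_eq_finset_map, sum_map, hcard]
  refine sum_congr rfl fun k _ ↦ congrArg f ?_
  simp only [Function.Embedding.trans_apply, Nat.castEmbedding_apply, addLeftEmbedding_apply]
  ring

lemma sum_Icc_neg_of_even {A : Type*} [AddCommGroup A] {f : ℤ → A} (hf : f.Even) (m : ℕ) :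
    ∑ n ∈ Icc (-m : ℤ) m, f n = f 0 + 2 • ∑ n ∈ Icc 1 m, f n := by
  have hrange : ∑ n ∈ range (m + 1), f n = ∑ n ∈ Icc 1 m, f n + f 0 := by
    rw [range_eq_Ico, sum_eq_sum_Ico_succ_bot m.succ_pos, add_comm]
    rfl
  rw [sum_Icc_of_even_eq_range hf, hrange]
  abel

lemma prod_range_two_mul {A : Type*} [CommMonoid A] (f : ℕ → A) (m : ℕ) :
    ∏ k ∈ range (2 * m), f k = ∏ j ∈ range m, f (2 * j) * f (2 * j + 1) := by
  induction m with
  | zero => simp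
  | succ m ih => rw [mul_add_one, prod_range_succ, prod_range_succ, prod_range_succ, ih, mul_assoc]

lemma prod_pow_odd {A : Type*} [CommMonoid A] (a : A) (m : ℕ) :
    ∏ j ∈ range m, a ^ (2 * j + 1) = a ^ m ^ 2 := by
  induction m with
  | zero => simp
  | succ m ih => rw [prod_range_succ, ih, ← pow_add]; ring_nf

variable {K : Type*} [Field K] {ζ : K} {m : ℕ}

lemma zpow_sub_sq_eq_qBinomial (hζ : IsPrimitiveRoot ζ (2 * m + 1)) {k : ℕ} (hk : k ≤ 2 * m) :
    ζ ^ ((k - m : ℤ) ^ 2) = ζ ^ m ^ 2 * (qBinomial (ζ ^ 2)⁻¹ (2 * m) k * (-1) ^ k) := by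
  have hζ0 : ζ ≠ 0 := hζ.ne_zero (by omega)
  have hq : IsPrimitiveRoot (ζ ^ 2)⁻¹ (2 * m + 1) :=
    (hζ.pow_of_coprime 2 (by simp)).inv
  have hchoose : (k + 1).choose 2 * 2 = (k + 1) * k := by
    rw [Nat.choose_two_right, Nat.add_sub_cancel, Nat.div_mul_cancel]
    simpa [mul_comm] using (Nat.even_mul_succ_self k).two_dvd
  have hbinom : qBinomial (ζ ^ 2)⁻¹ (2 * m) k * (-1) ^ k = ζ ^ ((k + 1) * k) := by
    have h := pow_choose_mul_qBinomial_of_isPrimitiveRoot hq hk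
    rw [inv_pow, ← pow_mul, mul_comm 2, hchoose, inv_mul_eq_iff_eq_mul₀ (pow_ne_zero _ hζ0)] at h
    rw [h, mul_assoc, ← mul_pow, neg_one_mul, neg_neg, one_pow, mul_one]
  have hexponent : ((k : ℤ) - m) ^ 2 =
      (m ^ 2 : ℕ) + ((k + 1) * k : ℕ) + ((2 * m + 1 : ℕ) : ℤ) * -k := by
    push_cast; ring
  rw [hbinom, hexponent, zpow_add₀ hζ0, zpow_add₀ hζ0, zpow_mul, zpow_natCast, zpow_natCast,
    zpow_natCast, hζ.pow_eq_one, one_zpow, mul_one]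

theorem sum_zpow_sq_eq_prod (hζ : IsPrimitiveRoot ζ (2 * m + 1)) :
    ∑ n ∈ Icc (-m : ℤ) m, ζ ^ (n ^ 2) =
      ∏ j ∈ range m, (ζ ^ (2 * j + 1) - (ζ ^ (2 * j + 1))⁻¹) := by
  have hζ0 : ζ ≠ 0 := hζ.ne_zero (by omega)
  calc ∑ n ∈ Icc (-m : ℤ) m, ζ ^ (n ^ 2)
      = ∑ k ∈ range (2 * m + 1), ζ ^ ((k - m : ℤ) ^ 2) := sum_Icc_neg_eq_sum_range _ m
    _ = ζ ^ m ^ 2 * rogersSzego (ζ ^ 2)⁻¹ (-1) (2 * m) := by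
        rw [rogersSzego, mul_sum]
        exact sum_congr rfl fun k hk ↦
          zpow_sub_sq_eq_qBinomial hζ (Nat.lt_succ_iff.mp (mem_range.mp hk))
    _ = ∏ j ∈ range m, ζ ^ (2 * j + 1) * (1 - (ζ ^ 2)⁻¹ ^ (2 * j + 1)) := by
        rw [rogersSzego_neg_one_two_mul, prod_mul_distrib, prod_pow_odd]
    _ = ∏ j ∈ range m, (ζ ^ (2 * j + 1) - (ζ ^ (2 * j + 1))⁻¹) := by
        refine prod_congr rfl fun j _ ↦ ?_
        rw [inv_pow, pow_right_comm, sq, mul_inv, mul_sub, mul_one, ← mul_assoc,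
          mul_inv_cancel₀ (pow_ne_zero _ hζ0), one_mul]

lemma prod_one_sub_pow_odd_mul_inv {q : K} (hq : IsPrimitiveRoot q (2 * m + 1)) :
    ∏ j ∈ range m, (1 - q ^ (2 * j + 1)) * (1 - (q ^ (2 * j + 1))⁻¹) = 2 * m + 1 := by
  have hinv : ∏ j ∈ range m, (1 - (q ^ (2 * j + 1))⁻¹) =
      ∏ j ∈ range m, (1 - q ^ (2 * j + 2)) := by
    rw [← prod_range_reflect]
    refine prod_congr rfl fun j hj ↦ ?_
    have hjm := mem_range.mp hj
    refine congrArg (1 - ·) (inv_eq_of_mul_eq_one_right ?_)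
    rw [← pow_add, show 2 * (m - 1 - j) + 1 + (2 * j + 2) = 2 * m + 1 by omega, hq.pow_eq_one]
  rw [prod_mul_distrib, hinv, ← prod_mul_distrib, ← prod_range_two_mul (fun k ↦ 1 - q ^ (k + 1)),
    hq.prod_one_sub_pow_eq_order]
  push_cast
  rfl

lemma sq_prod_pow_odd_sub_inv (hζ : IsPrimitiveRoot ζ (2 * m + 1)) :
    (∏ j ∈ range m, (ζ ^ (2 * j + 1) - (ζ ^ (2 * j + 1))⁻¹)) ^ 2 = (-1) ^ m * (2 * m + 1) := by
  have hζ0 : ζ ≠ 0 := hζ.ne_zero (by omega)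
  calc (∏ j ∈ range m, (ζ ^ (2 * j + 1) - (ζ ^ (2 * j + 1))⁻¹)) ^ 2
      = ∏ j ∈ range m, -1 * ((1 - (ζ ^ 2) ^ (2 * j + 1)) * (1 - ((ζ ^ 2) ^ (2 * j + 1))⁻¹)) := by
        rw [← prod_pow]
        refine prod_congr rfl fun j _ ↦ ?_
        rw [pow_right_comm]
        field_simp
        ring
    _ = (-1) ^ m * (2 * m + 1) := by
        rw [prod_mul_distrib, prod_const, card_range,
          prod_one_sub_pow_odd_mul_inv (hζ.pow_of_coprime 2 (by simp))]

end GaussSum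

section Complex

lemma neg_exp_pow_odd (m j : ℕ) :
    (-Complex.exp (π / (2 * m + 1) * Complex.I)) ^ (2 * j + 1) =
      -Complex.exp ((π * (2 * j + 1) / (2 * m + 1) : ℝ) * Complex.I) := by
  rw [Odd.neg_pow ⟨j, rfl⟩, ← Complex.exp_nat_mul]
  push_cast
  ring_nf

lemma isPrimitiveRoot_neg_exp (m : ℕ) :
    IsPrimitiveRoot (-Complex.exp (π / (2 * m + 1) * Complex.I)) (2 * m + 1) := by
  have hm : (2 * m + 1 : ℂ) ≠ 0 := by exact_mod_cast (2 * m).succ_ne_zero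
  have hcoprime : (m + 1).Coprime (2 * m + 1) := by
    rw [show 2 * m + 1 = m + (m + 1) by ring, Nat.coprime_add_self_right]
    simp
  convert Complex.isPrimitiveRoot_exp_of_coprime (m + 1) (2 * m + 1) (by omega) hcoprime using 1
  rw [neg_eq_neg_one_mul, ← Complex.exp_pi_mul_I, ← Complex.exp_add]
  congr 1
  push_cast
  field_simp
  ring

lemma prod_neg_exp_pow_odd_sub_inv (m : ℕ) :
    ∏ j ∈ range m, ((-Complex.exp (π / (2 * m + 1) * Complex.I)) ^ (2 * j + 1) -
        ((-Complex.exp (π / (2 * m + 1) * Complex.I)) ^ (2 * j + 1))⁻¹) =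
      (-Complex.I) ^ m * (∏ j ∈ range m, 2 * sin (π * (2 * j + 1) / (2 * m + 1)) : ℝ) := by
  have hconst : (-Complex.I) ^ m = ∏ _j ∈ range m, -Complex.I := by rw [prod_const, card_range]
  rw [Complex.ofReal_prod, hconst, ← prod_mul_distrib]
  refine prod_congr rfl fun j _ ↦ ?_
  rw [neg_exp_pow_odd, inv_neg, ← Complex.exp_neg, Complex.ofReal_mul, Complex.ofReal_ofNat,
    Complex.ofReal_sin, Complex.two_sin, ← neg_mul]
  linear_combination (Complex.exp ((π * (2 * j + 1) / (2 * m + 1) : ℝ) * Complex.I) -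
    Complex.exp (-(π * (2 * j + 1) / (2 * m + 1) : ℝ) * Complex.I)) * -Complex.I_sq

lemma prod_two_mul_sin_odd (m : ℕ) :
    ∏ j ∈ range m, 2 * sin (π * (2 * j + 1) / (2 * m + 1)) = √(2 * m + 1) := by
  have hsin_nonneg : ∀ j ∈ range m, 0 ≤ 2 * sin (π * (2 * j + 1) / (2 * m + 1)) := by
    intro j hj
    have hjm : (j : ℝ) ≤ m := by exact_mod_cast (mem_range.mp hj).le
    refine mul_nonneg zero_le_two (sin_nonneg_of_nonneg_of_le_pi (by positivity) ?_)
    rw [div_le_iff₀ (by positivity)]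
    gcongr
  refine ((sqrt_eq_iff_mul_self_eq (by positivity) (prod_nonneg hsin_nonneg)).mpr ?_).symm
  have h := sq_prod_pow_odd_sub_inv (isPrimitiveRoot_neg_exp m)
  rw [prod_neg_exp_pow_odd_sub_inv, mul_pow, ← pow_mul, mul_comm m, pow_mul, neg_sq,
    Complex.I_sq] at h
  rw [← sq]
  exact_mod_cast (mul_left_cancel₀ (pow_ne_zero m (neg_ne_zero.mpr one_ne_zero)) h).symm

theorem sum_neg_exp_zpow_sq (m : ℕ) :
    ∑ n ∈ Icc (-m : ℤ) m, (-Complex.exp (π / (2 * m + 1) * Complex.I)) ^ (n ^ 2) =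
      (-Complex.I) ^ m * √(2 * m + 1) := by
  rw [sum_zpow_sq_eq_prod (isPrimitiveRoot_neg_exp m), prod_neg_exp_pow_odd_sub_inv,
    prod_two_mul_sin_odd]

lemma re_neg_exp_zpow_sq (x : ℝ) (n : ℕ) :
    ((-Complex.exp (x * Complex.I)) ^ ((n : ℤ) ^ 2)).re = (-1) ^ n * cos (n ^ 2 * x) := by
  have hsign : (-1 : ℂ) ^ n ^ 2 = ((-1) ^ n : ℝ) := by
    rw [sq, pow_mul]
    rcases n.even_or_odd with hn | hn <;> simp [hn.neg_one_pow]
  have hexp : Complex.exp (x * Complex.I) ^ n ^ 2 =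
      Complex.exp ((n ^ 2 * x : ℝ) * Complex.I) := by
    rw [← Complex.exp_nat_mul]
    push_cast
    ring_nf
  rw [← Nat.cast_pow, zpow_natCast, neg_pow, hsign, hexp, Complex.re_ofReal_mul,
    Complex.exp_ofReal_mul_I_re]

theorem one_add_two_mul_sum_alternating_cos (m : ℕ) :
    1 + 2 * ∑ n ∈ Icc 1 m, (-1) ^ n * cos (π * (n : ℝ) ^ 2 / (2 * m + 1)) =
      ((-Complex.I) ^ m).re * √(2 * m + 1) := by
  set ζ := -Complex.exp (π / (2 * m + 1) * Complex.I) with hζ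
  have heven : (fun n : ℤ ↦ (ζ ^ (n ^ 2)).re).Even := fun n ↦ by simp only [neg_sq]
  have hterm (n : ℕ) : (ζ ^ ((n : ℤ) ^ 2)).re =
      (-1) ^ n * cos (π * (n : ℝ) ^ 2 / (2 * m + 1)) := by
    have h := re_neg_exp_zpow_sq (π / (2 * m + 1)) n
    push_cast at h
    rw [hζ, h, mul_div_left_comm, mul_div_assoc]
  calc 1 + 2 * ∑ n ∈ Icc 1 m, (-1) ^ n * cos (π * (n : ℝ) ^ 2 / (2 * m + 1))
      = ∑ n ∈ Icc (-m : ℤ) m, (ζ ^ (n ^ 2)).re := by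
        rw [sum_Icc_neg_of_even heven]
        simp [hterm]
    _ = ((-Complex.I) ^ m * √(2 * m + 1)).re := by rw [← Complex.re_sum, sum_neg_exp_zpow_sq]
    _ = ((-Complex.I) ^ m).re * √(2 * m + 1) := Complex.re_mul_ofReal _ _

end Complex

theorem alternating_cosine_sum_4k_sub_three (k : ℕ) (hk : 0 < k) :
    ∑ n ∈ Finset.Icc 1 (2 * k - 2), (-1 : ℝ) ^ n *
        Real.cos (π * (n : ℝ) ^ 2 / (4 * (k : ℝ) - 3)) =
      -1 / 2 - (-1 : ℝ) ^ k * Real.sqrt (4 * (k : ℝ) - 3) / 2 := by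
  obtain ⟨p, rfl⟩ := Nat.exists_eq_add_one.mpr hk
  have hmodulus : 4 * ((p + 1 : ℕ) : ℝ) - 3 = 2 * (2 * p : ℕ) + 1 := by push_cast; ring
  have hphase : ((-Complex.I) ^ (2 * p)).re = (-1) ^ p := by
    rw [pow_mul, neg_sq, Complex.I_sq]
    exact_mod_cast Complex.ofReal_re ((-1) ^ p)
  have hsum := one_add_two_mul_sum_alternating_cos (2 * p)
  rw [hphase] at hsum
  rw [hmodulus, show 2 * (p + 1) - 2 = 2 * p by omega, pow_succ]
  linarith
end
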